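/- arXiv:2206.09908 — 2 statements merged into one kernel-verified Lean document; each statement's English description precedes it below -/
import Mathlib

section
/- Non-integrability along periodic orbits (Lemma A.4(ii)). Let b be an admissible vector field with global flow X and Jacobian factor J, and let U : ℝ^d → ℝ be continuous. Suppose x ∈ ℝ^d lies on a periodic orbit, i.e. X τ x = x for some τ > 0. Then the nonnegative function t ↦ exp(−U(X t x)) · J t x is not Lebesgue integrable on ℝ; equivalently, its Lebesgue integral over ℝ (as a value in [0,∞]) is ∞. -/
/-!
Write `g t = exp (-U (X t x)) * J t x` and `c = ∫₀^τ div b (X s x) ds`. Along a `τ`-periodic orbit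
`div b` is `τ`-periodic in time, so `g (t + τ) = exp c * g t`. Hence the positive function `g` does
not decrease under the shift by `τ` (if `c ≥ 0`) or under the shift by `-τ` (if `c ≤ 0`). A positive
measurable function with such a monotonicity has infinite integral on a half-line
(`lintegral_eq_top_of_le_shift`): with `A = ∫_{(0,∞)} g`, splitting at `τ` gives
`A ≥ ∫_{(0,τ]} g + A` with a positive first term, which forces `A = ∞`.
-/

open MeasureTheory Filter

noncomputable section

/-- Euclidean state space ℝ^d. -/
abbrev Euc (d : ℕ) := EuclideanSpace ℝ (Fin d)

/-- Divergence of a vector field: trace of the Fréchet derivative. -/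
def vdiv {d : ℕ} (b : Euc d → Euc d) (x : Euc d) : ℝ :=
  LinearMap.trace ℝ (Euc d) (fderiv ℝ b x).toLinearMap

/-- A vector field is admissible if it is C¹ with globally bounded derivative. -/
def Admissible {d : ℕ} (b : Euc d → Euc d) : Prop :=
  ContDiff ℝ 1 b ∧ ∃ C : ℝ, ∀ x, ‖fderiv ℝ b x‖ ≤ C

/-- A global flow of the vector field `b`. -/
def IsGlobalFlow {d : ℕ} (b : Euc d → Euc d) (X : ℝ → Euc d → Euc d) : Prop :=
  (∀ x, X 0 x = x) ∧
  (∀ t s : ℝ, ∀ x, X (t + s) x = X t (X s x)) ∧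
  (∀ x : Euc d, ∀ t : ℝ, HasDerivAt (fun τ => X τ x) (b (X t x)) t)

/-- Jacobian factor of the flow: J t x = exp(∫₀ᵗ div b(X s x) ds). -/
def Jac {d : ℕ} (b : Euc d → Euc d) (X : ℝ → Euc d → Euc d) (t : ℝ) (x : Euc d) : ℝ :=
  Real.exp (∫ s in (0:ℝ)..t, vdiv b (X s x))

/-- A positive measurable function that does not decrease under a positive shift has infinite
integral. -/
theorem lintegral_eq_top_of_le_shift {g : ℝ → ENNReal} (hg : Measurable g) (hpos : ∀ t, g t ≠ 0)
    {τ : ℝ} (hτ : 0 < τ) (hshift : ∀ t, g t ≤ g (t + τ)) : ∫⁻ t, g t = ⊤ := by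
  have hfirst : ∫⁻ t in Set.Ioc 0 τ, g t ≠ 0 := by
    intro h
    rw [lintegral_eq_zero_iff hg] at h
    have hfalse : ∀ᵐ t ∂(volume.restrict (Set.Ioc 0 τ)), False := by
      filter_upwards [h] with t ht using hpos t ht
    have hvol := ae_iff.1 hfalse
    simp at hvol
    linarith
  have hsplit : ∫⁻ t in Set.Ioi 0, g t
      = (∫⁻ t in Set.Ioc 0 τ, g t) + ∫⁻ t in Set.Ioi τ, g t := by
    rw [← Set.Ioc_union_Ioi_eq_Ioi hτ.le,
      lintegral_union measurableSet_Ioi (Set.Ioc_disjoint_Ioi le_rfl)]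
  have htail : ∫⁻ t in Set.Ioi 0, g t ≤ ∫⁻ t in Set.Ioi τ, g t := by
    have hpre : (fun t : ℝ => t + τ) ⁻¹' Set.Ioi τ = Set.Ioi 0 := by
      ext t; simp
    rw [← (measurePreserving_add_right volume τ).setLIntegral_comp_preimage
      (measurableSet_Ioi (a := τ)) hg, hpre]
    exact lintegral_mono hshift
  by_contra hne
  have hA : ∫⁻ t in Set.Ioi 0, g t ≠ ⊤ :=
    ne_top_of_le_ne_top hne (setLIntegral_le_lintegral _ _)
  have hlt := ENNReal.lt_add_right hA hfirst
  rw [add_comm] at hlt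
  exact absurd (hlt.trans_le (add_le_add le_rfl htail)) (by rw [hsplit]; exact lt_irrefl _)

theorem continuous_vdiv {d : ℕ} {b : Euc d → Euc d} (hb : Admissible b) :
    Continuous (vdiv b) := by
  have h1 : Continuous (fderiv ℝ b) := hb.1.continuous_fderiv one_ne_zero
  have h2 : Continuous ((LinearMap.trace ℝ (Euc d)).comp
      (ContinuousLinearMap.coeLM ℝ : (Euc d →L[ℝ] Euc d) →ₗ[ℝ] _)) :=
    LinearMap.continuous_of_finiteDimensional _
  exact h2.comp h1

/-- Non-integrability along periodic orbits (Lemma A.4(ii)). -/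
theorem stmt_9 {d : ℕ} (hd : 0 < d)
    (b : Euc d → Euc d) (hb : Admissible b)
    (X : ℝ → Euc d → Euc d) (hX : IsGlobalFlow b X)
    (U : Euc d → ℝ) (hUc : Continuous U)
    (x : Euc d) (τ : ℝ) (hτ : 0 < τ) (hper : X τ x = x) :
    ¬ Integrable (fun t : ℝ => Real.exp (-(U (X t x))) * Jac b X t x) ∧
    (∫⁻ t : ℝ, ENNReal.ofReal (Real.exp (-(U (X t x))) * Jac b X t x)) = ⊤ := by
  have hXc : Continuous fun t => X t x :=
    continuous_iff_continuousAt.2 fun t => (hX.2.2 x t).continuousAt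
  have hXper : ∀ t, X (t + τ) x = X t x := fun t => by rw [hX.2.1, hper]
  have hdc : Continuous fun s => vdiv b (X s x) := (continuous_vdiv hb).comp hXc
  have hdper : Function.Periodic (fun s => vdiv b (X s x)) τ := fun s => by
    simp only [hXper]
  set c : ℝ := ∫ s in (0:ℝ)..τ, vdiv b (X s x) with hc
  set g : ℝ → ℝ := fun t => Real.exp (-(U (X t x))) * Jac b X t x with hg
  have hgpos : ∀ t, 0 < g t := fun t => mul_pos (Real.exp_pos _) (Real.exp_pos _)
  have hgc : Continuous g := by
    refine (Real.continuous_exp.comp (hUc.comp hXc).neg).mul (Real.continuous_exp.comp ?_)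
    exact intervalIntegral.continuous_primitive (fun a b => hdc.intervalIntegrable a b) 0
  have hgshift : ∀ t, g (t + τ) = Real.exp c * g t := by
    intro t
    have hint : ∫ s in (0:ℝ)..(t + τ), vdiv b (X s x)
        = (∫ s in (0:ℝ)..t, vdiv b (X s x)) + c := by
      rw [← intervalIntegral.integral_add_adjacent_intervals
        (hdc.intervalIntegrable 0 t) (hdc.intervalIntegrable t (t + τ)),
        hdper.intervalIntegral_add_eq t 0, zero_add]
    simp only [hg, Jac, hXper, hint, Real.exp_add]
    ring
  have hmeas : Measurable fun t => ENNReal.ofReal (g t) := hgc.measurable.ennreal_ofReal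
  have htop : ∫⁻ t, ENNReal.ofReal (g t) = ⊤ := by
    rcases le_total 0 c with h | h
    · refine lintegral_eq_top_of_le_shift hmeas (fun t => by simpa using hgpos t) hτ fun t => ?_
      refine ENNReal.ofReal_le_ofReal ?_
      rw [hgshift]
      exact le_mul_of_one_le_left (hgpos t).le (Real.one_le_exp h)
    · -- For `c ≤ 0` the time-reversed function `t ↦ g (-t)` does not decrease under the shift.
      rw [← (Measure.measurePreserving_neg (volume : Measure ℝ)).lintegral_comp hmeas]
      refine lintegral_eq_top_of_le_shift (hmeas.comp measurable_neg)
        (fun t => by simpa using hgpos (-t)) hτ fun t => ?_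
      refine ENNReal.ofReal_le_ofReal ?_
      have hs := hgshift (-(t + τ))
      rw [show -(t + τ) + τ = -t by ring] at hs
      rw [hs]
      exact mul_le_of_le_one_left (hgpos _).le (Real.exp_le_one_iff.2 h)
  exact ⟨fun hi => hi.lintegral_lt_top.ne htop, htop⟩
end
end

section
/- NEIS never increases the variance of vanilla importance sampling (Proposition H.1, inequality). Let U0, U1 : ℝ^d → ℝ be continuous with ∫_{ℝ^d} exp(−U0(x)) dx = 1, Z1 := ∫_{ℝ^d} exp(−U1(x)) dx < ∞, and ∫_{ℝ^d} exp(−2U1(x) + U0(x)) dx < ∞. Let b be an admissible vector field with global flow X and Jacobian factor J, and assume that for every t ∈ ℝ the map x ↦ X t x is continuously differentiable and satisfies det(D_x(X t ·)(x)) = J t x for all x. Assume moreover that there is an open set Ω₀ ⊆ ℝ^d whose complement has Lebesgue measure zero such that, for each W ∈ {U0, U1, 2U1 − U0}, the functions z ↦ ∫_0^∞ exp(−W(X t z))·J t z dt and z ↦ ∫_{−∞}^0 exp(−W(X t z))·J t z dt are finite-valued and continuous on Ω₀. Then ∫_{ℝ^d} exp(−U0(x)) · A(x)² dx ≤ ∫_{ℝ^d}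 exp(−2U1(x) + U0(x)) dx; i.e. the second moment of the NEIS estimator is at most the second moment exp(−2(U1 − U0)) of the vanilla importance-sampling estimator, so Var(b) ≤ Var^(max). -/
/-!
Write `F^W_t(x) = exp(-W(X t x)) J t x` and `B_W(x) = ∫_ℝ F^W_t(x) dt`, and let `W₂ = 2 U1 - U0`.
Along each orbit `(F^{U1})² = F^{U0} F^{W₂}`, so the Cauchy–Schwarz inequality gives
`A² ≤ B_{W₂} / B_{U0}` (`estimator_sq_le`), and it suffices to bound
`∫ exp(-U0) B_{W₂} / B_{U0}`.

By Tonelli this is the integral over `t` of `∫ exp(-U0(x)) F^{W₂}_t(x) / B_{U0}(x) dx`. The change of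
variables `y = X t x` (`lintegral_comp_flow`) and the cocycle identity
`B_{U0}(X s y) J s y = B_{U0}(y)` (`orbitIntegral_flow`) turn the inner integral into
`∫ exp(-W₂(y)) F^{U0}_{-t}(y) / B_{U0}(y) dy`. Integrating over `t` first, the factor `B_{U0}`
cancels, which leaves at most `∫ exp(-W₂)` (`lintegral_weighted_le`).

The exchange of integrals takes place in `ℝ≥0∞`. Joint measurability of `(t, x) ↦ F^W_t(x)` holds
because it is continuous in `t` and measurable in `x`.
-/

open MeasureTheory Filter

noncomputable section

/-- The weight `F^W_t(x) = exp(-W(X t x)) J t x`, valued in `ℝ≥0∞`. -/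
def flowWeight {d : ℕ} (b : Euc d → Euc d) (X : ℝ → Euc d → Euc d) (W : Euc d → ℝ)
    (t : ℝ) (x : Euc d) : ENNReal :=
  ENNReal.ofReal (Real.exp (-(W (X t x))) * Jac b X t x)

/-- The integral `∫_ℝ F^W_t(x) dt` of the weight along the whole orbit of `x`, as a Lebesgue
integral in `ℝ≥0∞`. -/
def orbitIntegral {d : ℕ} (b : Euc d → Euc d) (X : ℝ → Euc d → Euc d) (W : Euc d → ℝ)
    (x : Euc d) : ENNReal :=
  ∫⁻ t : ℝ, flowWeight b X W t x

lemma jac_pos {d : ℕ} (b : Euc d → Euc d) (X : ℝ → Euc d → Euc d) (t : ℝ) (x : Euc d) :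
    0 < Jac b X t x := Real.exp_pos _

section Flow

variable {d : ℕ} {b : Euc d → Euc d} {X : ℝ → Euc d → Euc d}

lemma continuous_flow_time (hX : IsGlobalFlow b X) (x : Euc d) : Continuous fun t => X t x :=
  continuous_iff_continuousAt.2 fun t => (hX.2.2 x t).continuousAt

lemma continuous_vdiv_flow (hb : Admissible b) (hX : IsGlobalFlow b X) (x : Euc d) :
    Continuous fun t => vdiv b (X t x) := by
  have h1 : Continuous (fderiv ℝ b) := hb.1.continuous_fderiv one_ne_zero
  have h2 : Continuous fun L : Euc d →L[ℝ] Euc d => LinearMap.trace ℝ (Euc d) L.toLinearMap :=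
    LinearMap.continuous_of_finiteDimensional
      ((LinearMap.trace ℝ (Euc d)).comp (ContinuousLinearMap.coeLM ℝ))
  exact h2.comp (h1.comp (continuous_flow_time hX x))

lemma continuous_jac_time (hb : Admissible b) (hX : IsGlobalFlow b X) (x : Euc d) :
    Continuous fun t => Jac b X t x :=
  Real.continuous_exp.comp (intervalIntegral.continuous_primitive
    (fun _ _ => (continuous_vdiv_flow hb hX x).intervalIntegrable _ _) 0)

lemma jac_add (hb : Admissible b) (hX : IsGlobalFlow b X) (t s : ℝ) (x : Euc d) :
    Jac b X (t + s) x = Jac b X t (X s x) * Jac b X s x := by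
  have hi : ∀ u v : ℝ, IntervalIntegrable (fun r => vdiv b (X r x)) volume u v :=
    fun _ _ => (continuous_vdiv_flow hb hX x).intervalIntegrable _ _
  unfold Jac
  rw [← Real.exp_add]
  congr 1
  have h : (∫ r in (0:ℝ)..t, vdiv b (X r (X s x))) = ∫ r in s..(t + s), vdiv b (X r x) := by
    simp_rw [← hX.2.1]
    rw [intervalIntegral.integral_comp_add_right (fun r => vdiv b (X r x)), zero_add]
  rw [h, add_comm (∫ r in s..(t + s), vdiv b (X r x)),
    intervalIntegral.integral_add_adjacent_intervals (hi _ _) (hi _ _)]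

lemma measurable_jac
    (hdiff : ∀ t : ℝ, ContDiff ℝ 1 (fun x => X t x))
    (hdet : ∀ (t : ℝ) (x : Euc d), (fderiv ℝ (fun y => X t y) x).det = Jac b X t x) (t : ℝ) :
    Measurable (Jac b X t) := by
  have h : Continuous fun x => (fderiv ℝ (fun y => X t y) x).det :=
    ContinuousLinearMap.continuous_det.comp ((hdiff t).continuous_fderiv one_ne_zero)
  exact (funext (hdet t) ▸ h).measurable

lemma measurable_flow (hX : IsGlobalFlow b X) (hdiff : ∀ t : ℝ, ContDiff ℝ 1 (fun x => X t x)) :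
    Measurable (Function.uncurry X) :=
  measurable_uncurry_of_continuous_of_measurable (continuous_flow_time hX)
    fun t => (hdiff t).continuous.measurable

lemma measurable_flowWeight (hb : Admissible b) (hX : IsGlobalFlow b X)
    (hdiff : ∀ t : ℝ, ContDiff ℝ 1 (fun x => X t x))
    (hdet : ∀ (t : ℝ) (x : Euc d), (fderiv ℝ (fun y => X t y) x).det = Jac b X t x)
    {W : Euc d → ℝ} (hW : Continuous W) :
    Measurable (Function.uncurry (flowWeight b X W)) := by
  have hJ : Measurable (Function.uncurry (Jac b X)) :=
    measurable_uncurry_of_continuous_of_measurable (continuous_jac_time hb hX)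
      (measurable_jac hdiff hdet)
  have hWX : Measurable fun p : ℝ × Euc d => W (Function.uncurry X p) :=
    hW.measurable.comp (measurable_flow hX hdiff)
  exact ((Real.measurable_exp.comp hWX.neg).mul hJ).ennreal_ofReal

lemma measurable_orbitIntegral (hb : Admissible b) (hX : IsGlobalFlow b X)
    (hdiff : ∀ t : ℝ, ContDiff ℝ 1 (fun x => X t x))
    (hdet : ∀ (t : ℝ) (x : Euc d), (fderiv ℝ (fun y => X t y) x).det = Jac b X t x)
    {W : Euc d → ℝ} (hW : Continuous W) :
    Measurable (orbitIntegral b X W) :=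
  (measurable_flowWeight hb hX hdiff hdet hW).lintegral_prod_left'

lemma flow_neg_flow (hX : IsGlobalFlow b X) (t : ℝ) (x : Euc d) : X (-t) (X t x) = x := by
  rw [← hX.2.1, neg_add_cancel, hX.1]

lemma flow_flow_neg (hX : IsGlobalFlow b X) (t : ℝ) (x : Euc d) : X t (X (-t) x) = x := by
  rw [← hX.2.1, add_neg_cancel, hX.1]

/-- Moving the base point along its own orbit shifts the time variable and divides the orbit
integral by the Jacobian factor. -/
lemma orbitIntegral_flow (hb : Admissible b) (hX : IsGlobalFlow b X) (W : Euc d → ℝ)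
    (s : ℝ) (y : Euc d) :
    orbitIntegral b X W (X s y) = orbitIntegral b X W y / ENNReal.ofReal (Jac b X s y) := by
  have hJ := jac_pos b X s y
  rw [ENNReal.eq_div_iff (by simpa using hJ) ENNReal.ofReal_ne_top]
  unfold orbitIntegral
  rw [← lintegral_const_mul' _ _ ENNReal.ofReal_ne_top,
    ← lintegral_add_right_eq_self (fun t => flowWeight b X W t y) s]
  refine lintegral_congr fun t => ?_
  unfold flowWeight
  rw [← ENNReal.ofReal_mul hJ.le, hX.2.1, jac_add hb hX]
  congr 1
  ring

/-- Change of variables `y = X t x`. -/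
lemma lintegral_comp_flow (hX : IsGlobalFlow b X)
    (hdiff : ∀ t : ℝ, ContDiff ℝ 1 (fun x => X t x))
    (hdet : ∀ (t : ℝ) (x : Euc d), (fderiv ℝ (fun y => X t y) x).det = Jac b X t x)
    (t : ℝ) (g : Euc d → ENNReal) :
    ∫⁻ x, ENNReal.ofReal (Jac b X t x) * g (X t x) = ∫⁻ y, g y := by
  have hinj : Function.Injective (X t) :=
    Function.LeftInverse.injective (g := X (-t)) (flow_neg_flow hX t)
  have hsurj : Function.Surjective (X t) := fun y => ⟨X (-t) y, flow_flow_neg hX t y⟩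
  have h := lintegral_image_eq_lintegral_abs_det_fderiv_mul volume MeasurableSet.univ
    (fun x _ => (((hdiff t).differentiable one_ne_zero) x).hasFDerivAt.hasFDerivWithinAt)
    hinj.injOn g
  rw [Set.image_univ, hsurj.range_eq, Measure.restrict_univ] at h
  rw [h]
  refine lintegral_congr fun x => ?_
  rw [hdet, abs_of_pos (jac_pos b X t x)]

/-- Averaging `exp(-W)` over orbits with the weights `F^U` does not increase its total mass. For
`U = U0` and `W = 2 U1 - U0` the right-hand side is the second moment of the vanilla estimator.
It is an inequality because no positivity or finiteness of the orbit integrals is assumed. -/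
lemma lintegral_weighted_le (hb : Admissible b) (hX : IsGlobalFlow b X)
    (hdiff : ∀ t : ℝ, ContDiff ℝ 1 (fun x => X t x))
    (hdet : ∀ (t : ℝ) (x : Euc d), (fderiv ℝ (fun y => X t y) x).det = Jac b X t x)
    {U W : Euc d → ℝ} (hU : Continuous U) (hW : Continuous W) :
    ∫⁻ x, ENNReal.ofReal (Real.exp (-(U x))) * (orbitIntegral b X W x / orbitIntegral b X U x) ≤
      ∫⁻ x, ENNReal.ofReal (Real.exp (-(W x))) := by
  have hmU := measurable_flowWeight hb hX hdiff hdet hU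
  have hmW := measurable_flowWeight hb hX hdiff hdet hW
  have hmL := measurable_orbitIntegral hb hX hdiff hdet hU
  calc ∫⁻ x, ENNReal.ofReal (Real.exp (-(U x))) *
        (orbitIntegral b X W x / orbitIntegral b X U x)
      = ∫⁻ x, ∫⁻ t : ℝ, ENNReal.ofReal (Real.exp (-(U x))) *
          (orbitIntegral b X U x)⁻¹ * flowWeight b X W t x := by
        refine lintegral_congr fun x => ?_
        have hm : Measurable fun t : ℝ => flowWeight b X W t x := hmW.comp measurable_prodMk_right
        rw [lintegral_const_mul _ hm, div_eq_mul_inv,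
          mul_assoc, mul_comm (orbitIntegral b X U x)⁻¹]
        rfl
    _ = ∫⁻ t : ℝ, ∫⁻ x, ENNReal.ofReal (Real.exp (-(U x))) *
          (orbitIntegral b X U x)⁻¹ * flowWeight b X W t x := by
        refine lintegral_lintegral_swap (Measurable.aemeasurable ?_)
        have h1 : Measurable fun x => ENNReal.ofReal (Real.exp (-(U x))) *
            (orbitIntegral b X U x)⁻¹ :=
          (Real.measurable_exp.comp hU.measurable.neg).ennreal_ofReal.mul hmL.inv
        exact (h1.comp measurable_fst).mul (hmW.comp measurable_swap)
    _ = ∫⁻ t : ℝ, ∫⁻ y, flowWeight b X U (-t) y *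
          (ENNReal.ofReal (Real.exp (-(W y))) / orbitIntegral b X U y) := by
        refine lintegral_congr fun t => ?_
        rw [← lintegral_comp_flow hX hdiff hdet t (fun y => flowWeight b X U (-t) y *
          (ENNReal.ofReal (Real.exp (-(W y))) / orbitIntegral b X U y))]
        refine lintegral_congr fun x => ?_
        -- the cocycle identity at `y = X t x` with time `-t`, read back at `x`
        have hc := orbitIntegral_flow hb hX U (-t) (X t x)
        rw [flow_neg_flow hX] at hc
        have hJ := jac_pos b X (-t) (X t x)
        rw [hc, ENNReal.inv_div (Or.inl ENNReal.ofReal_ne_top)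
          (Or.inl (by simpa using hJ))]
        unfold flowWeight
        rw [flow_neg_flow hX, ENNReal.ofReal_mul (Real.exp_pos _).le,
          ENNReal.ofReal_mul (Real.exp_pos _).le, div_eq_mul_inv, div_eq_mul_inv]
        ring
    _ = ∫⁻ y, ∫⁻ t : ℝ, flowWeight b X U (-t) y *
          (ENNReal.ofReal (Real.exp (-(W y))) / orbitIntegral b X U y) := by
        refine lintegral_lintegral_swap (Measurable.aemeasurable ?_)
        have h1 : Measurable fun y => ENNReal.ofReal (Real.exp (-(W y))) /
            orbitIntegral b X U y :=
          (Real.measurable_exp.comp hW.measurable.neg).ennreal_ofReal.div hmL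
        exact (hmU.comp (measurable_fst.neg.prodMk measurable_snd)).mul (h1.comp measurable_snd)
    _ ≤ ∫⁻ y, ENNReal.ofReal (Real.exp (-(W y))) := by
        refine lintegral_mono fun y => ?_
        have hm : Measurable fun t : ℝ => flowWeight b X U (-t) y :=
          hmU.comp (measurable_neg.prodMk measurable_const)
        rw [lintegral_mul_const _ hm,
          lintegral_neg_eq_self (fun t => flowWeight b X U t y)]
        exact ENNReal.mul_div_le

end Flow

/-- Cauchy–Schwarz in the form needed for the estimator. The nonnegativity of
`∫ (A √f₀ - √f₂)²` with the optimal `A = ∫ f₁ / ∫ f₀` is used through the pointwise bound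
`2 A f₁ - A² f₀ ≤ f₂`. -/
lemma estimator_sq_le {α : Type*} [MeasurableSpace α] {μ : Measure α} {f₀ f₁ f₂ : α → ℝ}
    (h₀ : Integrable f₀ μ) (h₁ : Integrable f₁ μ) (h₂ : Integrable f₂ μ)
    (hpos : 0 < ∫ t, f₀ t ∂μ) (hf₀ : ∀ t, 0 < f₀ t) (hf : ∀ t, f₁ t ^ 2 = f₀ t * f₂ t) :
    ((∫ t, f₁ t ∂μ) / ∫ t, f₀ t ∂μ) ^ 2 ≤ (∫ t, f₂ t ∂μ) / ∫ t, f₀ t ∂μ := by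
  set A := (∫ t, f₁ t ∂μ) / ∫ t, f₀ t ∂μ with hA
  have hA' : ∫ t, f₁ t ∂μ = A * ∫ t, f₀ t ∂μ := by rw [hA]; field_simp
  have hpt : ∀ t, 2 * A * f₁ t - A ^ 2 * f₀ t ≤ f₂ t := fun t => by
    refine le_of_mul_le_mul_left ?_ (hf₀ t)
    nlinarith [sq_nonneg (A * f₀ t - f₁ t), hf t]
  have hle : ∫ t, (2 * A * f₁ t - A ^ 2 * f₀ t) ∂μ ≤ ∫ t, f₂ t ∂μ :=
    integral_mono ((h₁.const_mul _).sub (h₀.const_mul _)) h₂ hpt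
  rw [integral_sub (h₁.const_mul _) (h₀.const_mul _), integral_const_mul, integral_const_mul,
    hA'] at hle
  rw [le_div_iff₀ hpos]
  linarith

/-- NEIS never increases the variance of vanilla importance sampling
(Proposition H.1, inequality). -/
theorem stmt_18 {d : ℕ} (hd : 0 < d)
    (U0 U1 : Euc d → ℝ) (hU0c : Continuous U0) (hU1c : Continuous U1)
    (hnorm : (∫ x : Euc d, Real.exp (-(U0 x))) = 1)
    (hZ1 : Integrable (fun x : Euc d => Real.exp (-(U1 x))))
    (h2nd : Integrable (fun x : Euc d => Real.exp (-(2 * U1 x - U0 x))))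
    (b : Euc d → Euc d) (hb : Admissible b)
    (X : ℝ → Euc d → Euc d) (hX : IsGlobalFlow b X)
    (hdiff : ∀ t : ℝ, ContDiff ℝ 1 (fun x => X t x))
    (hdet : ∀ (t : ℝ) (x : Euc d), (fderiv ℝ (fun y => X t y) x).det = Jac b X t x)
    (Ω₀ : Set (Euc d)) (hΩopen : IsOpen Ω₀) (hΩfull : volume Ω₀ᶜ = 0)
    (hint : ∀ W : Euc d → ℝ, (W = U0 ∨ W = U1 ∨ W = fun x => 2 * U1 x - U0 x) →
      (∀ z ∈ Ω₀, IntegrableOn (fun t : ℝ => Real.exp (-(W (X t z))) * Jac b X t z) (Set.Ioi 0)) ∧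
      (∀ z ∈ Ω₀, IntegrableOn (fun t : ℝ => Real.exp (-(W (X t z))) * Jac b X t z) (Set.Iio 0)) ∧
      ContinuousOn (fun z => ∫ t in Set.Ioi (0:ℝ), Real.exp (-(W (X t z))) * Jac b X t z) Ω₀ ∧
      ContinuousOn (fun z => ∫ t in Set.Iio (0:ℝ), Real.exp (-(W (X t z))) * Jac b X t z) Ω₀) :
    (∫ x : Euc d, Real.exp (-(U0 x)) *
        ((∫ t : ℝ, Real.exp (-(U1 (X t x))) * Jac b X t x) /
          (∫ t : ℝ, Real.exp (-(U0 (X t x))) * Jac b X t x)) ^ 2) ≤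
      ∫ x : Euc d, Real.exp (-(2 * U1 x - U0 x)) := by
  have hW₂c : Continuous fun x => 2 * U1 x - U0 x := (hU1c.const_mul 2).sub hU0c
  -- on `Ω₀` the two half-line hypotheses combine to integrability over the whole orbit
  have hfull : ∀ W : Euc d → ℝ, (W = U0 ∨ W = U1 ∨ W = fun x => 2 * U1 x - U0 x) →
      ∀ z ∈ Ω₀, Integrable fun t : ℝ => Real.exp (-(W (X t z))) * Jac b X t z := by
    intro W hW z hz
    rw [← integrableOn_univ, ← Set.Iic_union_Ioi (a := (0 : ℝ))]
    exact ((integrableOn_Iic_iff_integrableOn_Iio enorm_ne_top).2 ((hint W hW).2.1 z hz)).union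
      ((hint W hW).1 z hz)
  have hlint : ∀ W : Euc d → ℝ, (W = U0 ∨ W = U1 ∨ W = fun x => 2 * U1 x - U0 x) →
      ∀ z ∈ Ω₀, ENNReal.ofReal (∫ t : ℝ, Real.exp (-(W (X t z))) * Jac b X t z) =
        orbitIntegral b X W z := by
    intro W hW z hz
    exact ofReal_integral_eq_lintegral_ofReal (hfull W hW z hz)
      (ae_of_all _ fun t => (mul_pos (Real.exp_pos _) (jac_pos b X t z)).le)
  have hae : ∀ᵐ x : Euc d, x ∈ Ω₀ := hΩfull
  have hkey : ∫⁻ x : Euc d, ENNReal.ofReal ‖Real.exp (-(U0 x)) *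
        ((∫ t : ℝ, Real.exp (-(U1 (X t x))) * Jac b X t x) /
          (∫ t : ℝ, Real.exp (-(U0 (X t x))) * Jac b X t x)) ^ 2‖ ≤
      ∫⁻ x : Euc d, ENNReal.ofReal (Real.exp (-(2 * U1 x - U0 x))) := by
    refine le_trans (lintegral_mono_ae ?_)
      (lintegral_weighted_le hb hX hdiff hdet hU0c hW₂c)
    filter_upwards [hae] with x hx
    have h0 := hfull U0 (Or.inl rfl) x hx
    have hpos : 0 < ∫ t : ℝ, Real.exp (-(U0 (X t x))) * Jac b X t x := by
      unfold Jac at h0 ⊢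
      simp_rw [← Real.exp_add] at h0 ⊢
      exact integral_exp_pos h0
    have hA := estimator_sq_le h0 (hfull U1 (Or.inr (Or.inl rfl)) x hx)
      (hfull _ (Or.inr (Or.inr rfl)) x hx) hpos
      (fun t => mul_pos (Real.exp_pos _) (jac_pos b X t x)) (fun t => by
        have he : Real.exp (-(U1 (X t x))) ^ 2 =
            Real.exp (-(U0 (X t x))) * Real.exp (-(2 * U1 (X t x) - U0 (X t x))) := by
          rw [← Real.exp_add, ← Real.exp_nat_mul]
          congr 1
          push_cast
          ring
        rw [mul_pow, he]
        ring)
    rw [Real.norm_of_nonneg (by positivity), ENNReal.ofReal_mul (Real.exp_pos _).le,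
      ← hlint U0 (Or.inl rfl) x hx, ← hlint _ (Or.inr (Or.inr rfl)) x hx,
      ← ENNReal.ofReal_div_of_pos hpos]
    gcongr
  refine (Real.le_norm_self _).trans ((norm_integral_le_lintegral_norm _).trans ?_)
  have hR := ofReal_integral_eq_lintegral_ofReal h2nd (ae_of_all _ fun x => (Real.exp_pos _).le)
  rw [← hR] at hkey
  exact ENNReal.toReal_le_of_le_ofReal (integral_nonneg fun x => (Real.exp_pos _).le) hkey
end
end
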